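/- Let M ≥ 2 be an integer, let u* be a minimizer of ψ_M over U_M, and set u*_0 = 0 and u*_M = 1. Suppose u*_j = u*_{j−1} for some 1 ≤ j ≤ M. Then for every γ ∈ 𝒮, η_j(u*, γ) − h_M(γ) < ψ_M(u*); moreover, if j = 1 then also u*_1 < ψ_M(u*). -/

import Mathlib

noncomputable def gammaMin (d : ℕ) (β : ℝ) : ℝ := β / (2 * β + d)

noncomputable def gammaMax (d : ℕ) (β : ℝ) : ℝ := (β + d) / (2 * β + d)

noncomputable def Sset (d : ℕ) (β : ℝ) : Set ℝ := Set.Icc (gammaMin d β) (gammaMax d β)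

noncomputable def hFun (M : ℕ) (γ : ℝ) : ℝ := (1 - γ) / (1 - γ ^ M)

/-- η_1(u,γ) = u_1, η_i(u,γ) = u_i − γ·u_{i−1} for 2 ≤ i ≤ M−1, η_M(u,γ) = 1 − γ·u_{M−1}. -/
noncomputable def etaFun (M : ℕ) (u : ℕ → ℝ) (γ : ℝ) (i : ℕ) : ℝ :=
  if i = 1 then u 1 else if i = M then 1 - γ * u (M - 1) else u i - γ * u (i - 1)

/-- Ψ_M(u,γ) = max_{1≤i≤M} η_i(u,γ) − h_M(γ). -/
noncomputable def PsiFun (M : ℕ) (u : ℕ → ℝ) (γ : ℝ) : ℝ :=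
  (⨆ i : Set.Icc 1 M, etaFun M u γ i.1) - hFun M γ

/-- ψ_M(u) = max( u_1, sup_{γ∈𝒮} Ψ_M(u,γ) ). -/
noncomputable def psiFun (d : ℕ) (β : ℝ) (M : ℕ) (u : ℕ → ℝ) : ℝ :=
  max (u 1) (⨆ γ : Sset d β, PsiFun M u γ.1)

/-- U_M = { u : 0 ≤ u_1 ≤ u_2 ≤ ⋯ ≤ u_{M−1} ≤ 1 } (only coordinates 1,…,M−1 matter). -/
def UM (M : ℕ) : Set (ℕ → ℝ) :=
  {u | 0 ≤ u 1 ∧ u (M - 1) ≤ 1 ∧ ∀ i, 1 ≤ i → i + 1 ≤ M - 1 → u i ≤ u (i + 1)}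

/-- ψ*_M = inf_{u ∈ U_M} ψ_M(u). -/
noncomputable def psiStar (d : ℕ) (β : ℝ) (M : ℕ) : ℝ :=
  sInf (psiFun d β M '' UM M)

/-!
For `u 0 = 0` and `u M = 1` the increments `η_i = u i - γ * u (i - 1)` satisfy
`∑ γ ^ (M - i) * η_i = 1` by telescoping, so `h_M(γ) = 1 / ∑ γ ^ (M - i)` is their weighted average.
A flat step `u j = u (j - 1)` gives `η_j = (1 - γ) * u j ≤ 1 - γ < h_M(γ)`, strictly below the
average, so another increment lies strictly above it and `ψ_M(u) > 0`. Both claims follow, since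
`η_j - h_M(γ) < 0`, and `u 1 = 0` when `j = 1`.
-/

section WeightedAverage

open Finset

theorem sum_pow_mul_succ_sub_mul {R : Type*} [CommRing R] (a : R) (f : ℕ → R) (n : ℕ) :
    ∑ i ∈ range n, a ^ (n - 1 - i) * (f (i + 1) - a * f i) = f n - a ^ n * f 0 := by
  have hterm : ∀ i ∈ range n, a ^ (n - 1 - i) * (f (i + 1) - a * f i) =
      a ^ (n - (i + 1)) * f (i + 1) - a ^ (n - i) * f i := by
    intro i hi
    have hexp : n - i = n - 1 - i + 1 := by have := mem_range.1 hi; omega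
    rw [show n - (i + 1) = n - 1 - i by omega, hexp, pow_succ]
    ring
  rw [sum_congr rfl hterm, sum_range_sub fun i => a ^ (n - i) * f i]
  simp

theorem exists_lt_succ_sub_mul {R : Type*} [CommRing R] [LinearOrder R] [IsStrictOrderedRing R]
    {a c : R} {f : ℕ → R} {n j : ℕ} (ha : 0 < a)
    (hc : c * ∑ i ∈ range n, a ^ i = f n - a ^ n * f 0)
    (hj : j < n) (hlt : f (j + 1) - a * f j < c) :
    ∃ i < n, c < f (i + 1) - a * f i := by
  have hweight : ∀ i, 0 < a ^ (n - 1 - i) := fun i => pow_pos ha _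
  have hsum : ∑ i ∈ range n, a ^ (n - 1 - i) * (f (i + 1) - a * f i - c) = 0 := by
    simp_rw [mul_sub _ _ c]
    rw [sum_sub_distrib, sum_pow_mul_succ_sub_mul, ← sum_mul,
      sum_range_reflect (fun i => a ^ i), mul_comm _ c, hc, sub_self]
  obtain ⟨i, hi, hpos⟩ := exists_pos_of_sum_zero_of_exists_nonzero _ hsum
    ⟨j, mem_range.2 hj, mul_ne_zero (hweight j).ne' (sub_neg.2 hlt).ne⟩
  exact ⟨i, mem_range.1 hi, sub_pos.1 (pos_of_mul_pos_right hpos (hweight i).le)⟩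

end WeightedAverage

section HFun

variable {M : ℕ} {γ : ℝ}

theorem hFun_nonneg (hγ : γ ∈ Set.Icc (0 : ℝ) 1) : 0 ≤ hFun M γ :=
  div_nonneg (sub_nonneg.2 hγ.2) (sub_nonneg.2 (pow_le_one₀ hγ.1 hγ.2))

theorem hFun_mul_geom_sum (hM : M ≠ 0) (hγ : γ ∈ Set.Ioo (0 : ℝ) 1) :
    hFun M γ * ∑ i ∈ Finset.range M, γ ^ i = 1 := by
  have hpow : γ ^ M < 1 := pow_lt_one₀ hγ.1.le hγ.2 hM
  rw [hFun, div_mul_eq_mul_div, mul_neg_geom_sum, div_self (sub_pos.2 hpow).ne']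

theorem one_sub_lt_hFun (hM : M ≠ 0) (hγ : γ ∈ Set.Ioo (0 : ℝ) 1) : 1 - γ < hFun M γ := by
  have hpow : γ ^ M < 1 := pow_lt_one₀ hγ.1.le hγ.2 hM
  rw [hFun, lt_div_iff₀ (sub_pos.2 hpow)]
  exact mul_lt_of_lt_one_right (sub_pos.2 hγ.2) (sub_lt_self 1 (pow_pos hγ.1 M))

end HFun

section Sset

variable {d : ℕ} {β : ℝ}

theorem Sset_subset_Ioo (hβ : 0 < β) : Sset d β ⊆ Set.Ioo 0 1 := by
  have hden : 0 < 2 * β + d := by positivity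
  refine Set.Icc_subset_Ioo (div_pos hβ hden) ?_
  rw [gammaMax, div_lt_one hden]
  linarith

theorem gammaMin_mem_Sset (hβ : 0 < β) : gammaMin d β ∈ Sset d β := by
  refine Set.left_mem_Icc.2 ?_
  rw [gammaMin, gammaMax]
  gcongr
  exact le_add_of_nonneg_right d.cast_nonneg

end Sset

section Profile

variable {d : ℕ} {β : ℝ} {M : ℕ} {u : ℕ → ℝ} {γ : ℝ} {i j : ℕ}

theorem etaFun_succ (hu0 : u 0 = 0) (huM : u M = 1) :
    etaFun M u γ (i + 1) = u (i + 1) - γ * u i := by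
  unfold etaFun
  split_ifs with h1 hM
  · obtain rfl : i = 0 := by omega
    simp [hu0]
  · subst hM
    rw [huM, Nat.add_sub_cancel]
  · rw [Nat.add_sub_cancel]

theorem etaFun_sub_hFun_le_PsiFun (hi : i ∈ Set.Icc 1 M) :
    etaFun M u γ i - hFun M γ ≤ PsiFun M u γ :=
  sub_le_sub_right (le_ciSup (f := fun i : Set.Icc 1 M => etaFun M u γ i)
    (Finite.bddAbove_range _) ⟨i, hi⟩) _

theorem monotoneOn_of_mem_UM (hu : u ∈ UM M) (hu0 : u 0 = 0) (huM : u M = 1) :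
    MonotoneOn u (Set.Iic M) := by
  obtain ⟨hfirst, hlast, hmid⟩ := hu
  refine monotoneOn_of_le_add_one Set.ordConnected_Iic fun i _ _ hi => ?_
  rw [Set.mem_Iic] at hi
  rcases i.eq_zero_or_pos with rfl | hi0
  · rwa [hu0]
  rcases hi.eq_or_lt with rfl | hiM
  · rwa [huM]
  · exact hmid i hi0 (by omega)

theorem mem_Icc_of_mem_UM (hu : u ∈ UM M) (hu0 : u 0 = 0) (huM : u M = 1) (hi : i ≤ M) :
    u i ∈ Set.Icc 0 1 := by
  have hmono := monotoneOn_of_mem_UM hu hu0 huM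
  rw [← hu0, ← huM]
  exact ⟨hmono M.zero_le hi i.zero_le, hmono hi Set.self_mem_Iic hi⟩

theorem PsiFun_le_one (hu : u ∈ UM M) (hu0 : u 0 = 0) (huM : u M = 1)
    (hγ : γ ∈ Set.Icc (0 : ℝ) 1) : PsiFun M u γ ≤ 1 := by
  have heta : ∀ i : Set.Icc 1 M, etaFun M u γ i ≤ 1 := by
    rintro ⟨i, hi1, hiM⟩
    obtain ⟨i, rfl⟩ := Nat.exists_eq_add_of_le' hi1
    rw [etaFun_succ hu0 huM]
    have hprev : 0 ≤ u i := (mem_Icc_of_mem_UM hu hu0 huM (i.le_succ.trans hiM)).1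
    exact (sub_le_self _ (mul_nonneg hγ.1 hprev)).trans (mem_Icc_of_mem_UM hu hu0 huM hiM).2
  exact (sub_le_self _ (hFun_nonneg hγ)).trans (Real.iSup_le heta zero_le_one)

theorem PsiFun_le_psiFun (hβ : 0 < β) (hu : u ∈ UM M) (hu0 : u 0 = 0) (huM : u M = 1)
    (hγ : γ ∈ Sset d β) : PsiFun M u γ ≤ psiFun d β M u := by
  have hbdd : BddAbove (Set.range fun γ : Sset d β => PsiFun M u γ) :=
    ⟨1, Set.forall_mem_range.2 fun γ =>
      PsiFun_le_one hu hu0 huM (Set.Ioo_subset_Icc_self (Sset_subset_Ioo hβ γ.2))⟩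
  exact (le_ciSup hbdd ⟨γ, hγ⟩).trans (le_max_right _ _)

theorem etaFun_succ_lt_hFun_of_eq (hu0 : u 0 = 0) (huM : u M = 1)
    (hγ : γ ∈ Set.Ioo (0 : ℝ) 1) (hM : M ≠ 0) (hj : u j ≤ 1) (hflat : u (j + 1) = u j) :
    etaFun M u γ (j + 1) < hFun M γ :=
  calc
    etaFun M u γ (j + 1) = (1 - γ) * u j := by rw [etaFun_succ hu0 huM, hflat]; ring
    _ ≤ 1 - γ := mul_le_of_le_one_right (sub_nonneg.2 hγ.2.le) hj
    _ < hFun M γ := one_sub_lt_hFun hM hγ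

theorem PsiFun_pos_of_etaFun_lt (hu0 : u 0 = 0) (huM : u M = 1) (hγ : γ ∈ Set.Ioo (0 : ℝ) 1)
    (hj : j < M) (hlt : etaFun M u γ (j + 1) < hFun M γ) : 0 < PsiFun M u γ := by
  have haverage : hFun M γ * ∑ i ∈ Finset.range M, γ ^ i = u M - γ ^ M * u 0 := by
    rw [hFun_mul_geom_sum (Nat.ne_zero_of_lt hj) hγ, hu0, huM, mul_zero, sub_zero]
  rw [etaFun_succ hu0 huM] at hlt
  obtain ⟨i, hi, hgt⟩ := exists_lt_succ_sub_mul hγ.1 haverage hj hlt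
  rw [← etaFun_succ hu0 huM] at hgt
  exact (sub_pos.2 hgt).trans_le (etaFun_sub_hFun_le_PsiFun ⟨i.succ_pos, hi⟩)

end Profile

theorem stmt6_general (d : ℕ) (β : ℝ) (hβ : 0 < β) (M : ℕ)
    (u : ℕ → ℝ) (hu : u ∈ UM M) (hu0 : u 0 = 0) (huM : u M = 1)
    (j : ℕ) (hj1 : 1 ≤ j) (hjM : j ≤ M) (heq : u j = u (j - 1)) :
    (∀ γ ∈ Sset d β, etaFun M u γ j - hFun M γ < psiFun d β M u) ∧
    (j = 1 → u 1 < psiFun d β M u) := by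
  obtain ⟨k, rfl⟩ := Nat.exists_eq_add_of_le' hj1
  rw [Nat.add_sub_cancel] at heq
  have hbelow : ∀ γ ∈ Sset d β, etaFun M u γ (k + 1) < hFun M γ := fun γ hγ =>
    etaFun_succ_lt_hFun_of_eq hu0 huM (Sset_subset_Ioo hβ hγ) (Nat.ne_zero_of_lt hjM)
      (mem_Icc_of_mem_UM hu hu0 huM (k.le_succ.trans hjM)).2 heq
  have hpos : 0 < psiFun d β M u :=
    have hmem := gammaMin_mem_Sset hβ
    (PsiFun_pos_of_etaFun_lt hu0 huM (Sset_subset_Ioo hβ hmem) hjM (hbelow _ hmem)).trans_le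
      (PsiFun_le_psiFun hβ hu hu0 huM hmem)
  refine ⟨fun γ hγ => (sub_neg.2 (hbelow γ hγ)).trans hpos, fun hk => ?_⟩
  obtain rfl : k = 0 := by omega
  rwa [heq, hu0]

theorem stmt6 (d : ℕ) (hd : 1 ≤ d) (β : ℝ) (hβ : 0 < β) (M : ℕ) (hM2 : 2 ≤ M)
    (u : ℕ → ℝ) (hu : u ∈ UM M) (hmin : psiFun d β M u = psiStar d β M)
    (hu0 : u 0 = 0) (huM : u M = 1)
    (j : ℕ) (hj1 : 1 ≤ j) (hjM : j ≤ M) (heq : u j = u (j - 1)) :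
    (∀ γ ∈ Sset d β, etaFun M u γ j - hFun M γ < psiFun d β M u) ∧
    (j = 1 → u 1 < psiFun d β M u) :=
  stmt6_general d β hβ M u hu hu0 huM j hj1 hjM heq
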